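/- arXiv:2501.00780 — 2 statements merged into one kernel-verified Lean document; each statement's English description precedes it below -/
import Mathlib

section
/- Let T > 0 and let f : [0,T] → [0, ∞) be a Borel measurable, locally bounded, non-negative and non-decreasing function, and let φ : [0,T] → [0, ∞) be a non-negative non-decreasing function. Suppose there exist positive real constants A and B such that for every t ∈ [0,T], f(t) ≤ A∫₀^t f(s) ds + B(∫₀^t f(s)² ds)^{1/2} + φ(t). Then for every t ∈ [0,T], f(t) ≤ 2 e^{(2A + B²) t} φ(t). -/
open MeasureTheory Set intervalIntegral

/-- **"À la Gronwall" inequality** (Lemma 3.3).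
Let `f : [0,T] → ℝ⁺` be Borel measurable, locally bounded, non-negative and non-decreasing,
and let `φ : [0,T] → ℝ⁺` be non-negative and non-decreasing. If there are positive constants
`A, B` such that `f(t) ≤ A ∫₀^t f(s) ds + B (∫₀^t f(s)² ds)^{1/2} + φ(t)` for all `t ∈ [0,T]`,
then `f(t) ≤ 2 e^{(2A + B²) t} φ(t)` for all `t ∈ [0,T]`. -/
theorem a_la_gronwall
    (T : ℝ) (hT : 0 < T) (f φ : ℝ → ℝ)
    (hf_meas : Measurable f)
    (hf_bdd : BddAbove (f '' Set.Icc 0 T))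
    (hf_nonneg : ∀ t ∈ Set.Icc 0 T, 0 ≤ f t)
    (hf_mono : MonotoneOn f (Set.Icc 0 T))
    (hφ_nonneg : ∀ t ∈ Set.Icc 0 T, 0 ≤ φ t)
    (hφ_mono : MonotoneOn φ (Set.Icc 0 T))
    (A B : ℝ) (hA : 0 < A) (hB : 0 < B)
    (h : ∀ t ∈ Set.Icc 0 T,
      f t ≤ A * (∫ s in (0:ℝ)..t, f s) + B * Real.sqrt (∫ s in (0:ℝ)..t, (f s) ^ 2) + φ t) :
    ∀ t ∈ Set.Icc 0 T, f t ≤ 2 * Real.exp ((2 * A + B ^ 2) * t) * φ t := by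
  intro t ht
  have hfi : ∀ a ∈ Set.Icc 0 T, ∀ b ∈ Set.Icc 0 T, IntervalIntegrable f volume a b := by
    intro a ha b hb
    exact (hf_mono.mono (Set.uIcc_subset_Icc ha hb)).intervalIntegrable
  have h0 : (0:ℝ) ∈ Set.Icc 0 T := ⟨le_rfl, hT.le⟩
  have hf2 : ∀ b ∈ Set.Icc 0 T, IntervalIntegrable (fun s => (f s)^2) volume 0 b := by
    intro b hb
    apply MonotoneOn.intervalIntegrable
    intro x hx y hy hxy
    have hx' := Set.uIcc_subset_Icc h0 hb hx
    have hy' := Set.uIcc_subset_Icc h0 hb hy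
    exact pow_le_pow_left₀ (hf_nonneg x hx') (hf_mono hx' hy' hxy) 2
  set K := 2 * A + B ^ 2 with hK
  have hKpos : 0 < K := by positivity
  -- reduction to a linear inequality
  have key : ∀ s ∈ Set.Icc 0 T, f s ≤ K * (∫ u in (0:ℝ)..s, f u) + 2 * φ s := by
    intro s hs
    have hI : 0 ≤ ∫ u in (0:ℝ)..s, f u :=
      intervalIntegral.integral_nonneg hs.1 fun u hu => hf_nonneg u ⟨hu.1, hu.2.trans hs.2⟩
    have hle : (∫ u in (0:ℝ)..s, (f u)^2) ≤ f s * ∫ u in (0:ℝ)..s, f u := by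
      rw [← intervalIntegral.integral_const_mul]
      apply intervalIntegral.integral_mono_on hs.1 (hf2 s hs) ((hfi 0 h0 s hs).const_mul _)
      intro u hu
      have hu' : u ∈ Set.Icc 0 T := ⟨hu.1, hu.2.trans hs.2⟩
      rw [pow_two]
      exact mul_le_mul_of_nonneg_right (hf_mono hu' hs hu.2) (hf_nonneg u hu')
    have hfs := hf_nonneg s hs
    have hsq : B * Real.sqrt (∫ u in (0:ℝ)..s, (f u)^2)
        ≤ f s / 2 + B ^ 2 / 2 * ∫ u in (0:ℝ)..s, f u := by
      set I := ∫ u in (0:ℝ)..s, f u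
      refine (fun h1 h2 => (abs_le_of_sq_le_sq h1 h2 |> le_trans (le_abs_self _))) ?_ ?_
      · have hn : 0 ≤ ∫ u in (0:ℝ)..s, (f u)^2 :=
          intervalIntegral.integral_nonneg hs.1 fun u hu => sq_nonneg _
        rw [mul_pow, Real.sq_sqrt hn]
        have := mul_le_mul_of_nonneg_left hle (sq_nonneg B)
        nlinarith [sq_nonneg (f s / 2 - B ^ 2 / 2 * I)]
      · positivity
    have := h s hs
    rw [hK]
    linarith
  have htT : Set.Icc 0 t ⊆ Set.Icc 0 T := Set.Icc_subset_Icc_right ht.2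
  set G : ℝ → ℝ := fun s => K * (∫ u in (0:ℝ)..s, f u) + 2 * φ t with hG
  have hfG : ∀ s ∈ Set.Icc 0 t, f s ≤ G s := by
    intro s hs
    have := key s (htT hs)
    have := hφ_mono (htT hs) ht hs.2
    simp only [hG]
    linarith
  have hGc : ContinuousOn G (Set.Icc 0 t) := by
    have := intervalIntegral.continuousOn_primitive_interval'
      (hfi 0 h0 t ht) (Set.left_mem_uIcc)
    rw [Set.uIcc_of_le ht.1] at this
    exact (this.const_mul K).add continuousOn_const
  have main := le_gronwallBound_of_liminf_deriv_right_le (f := G) (f' := fun s => K * G s)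
    (δ := 2 * φ t) (K := K) (ε := 0) (a := 0) (b := t) hGc ?_ (by simp [hG])
    (fun x _ => by simp) t ⟨ht.1, le_rfl⟩
  · rw [gronwallBound_ε0, sub_zero] at main
    have := hfG t ⟨ht.1, le_rfl⟩
    linarith
  · intro x hx r hr
    apply Filter.Eventually.frequently
    have hc : Filter.Tendsto (fun z => K * G z) (nhdsWithin x (Set.Ioi x)) (nhds (K * G x)) := by
      have h1 := (hGc x ⟨hx.1, hx.2.le⟩).mono_of_mem_nhdsWithin (s := Set.Ioi x)
        (Filter.mem_of_superset (Ioo_mem_nhdsGT hx.2)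
          fun z hz => ⟨hx.1.trans hz.1.le, hz.2.le⟩)
      exact Filter.Tendsto.const_mul K h1
    filter_upwards [hc.eventually_lt_const hr, Ioo_mem_nhdsGT hx.2] with z hz hzx
    have hx' : x ∈ Set.Icc 0 T := htT ⟨hx.1, hx.2.le⟩
    have hzt : z ∈ Set.Icc 0 t := ⟨hx.1.trans hzx.1.le, hzx.2.le⟩
    have hz' : z ∈ Set.Icc 0 T := htT hzt
    have hd : G z - G x = K * ∫ u in x..z, f u := by
      have := intervalIntegral.integral_interval_sub_left (hfi 0 h0 z hz') (hfi 0 h0 x hx')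
      rw [← this]
      simp only [hG]
      ring
    have hb : (∫ u in x..z, f u) ≤ (z - x) * f z := by
      have := intervalIntegral.integral_mono_on (g := fun _ => f z) hzx.1.le (hfi x hx' z hz')
        intervalIntegrable_const (fun u hu => hf_mono ⟨hx.1.trans hu.1, hu.2.trans hz'.2⟩ hz' hu.2)
      simpa using this
    have hpos : 0 < z - x := sub_pos.2 hzx.1
    refine lt_of_le_of_lt ?_ hz
    rw [hd, inv_mul_le_iff₀ hpos]
    have h2 := mul_le_mul_of_nonneg_left (hfG z hzt) hpos.le
    have h3 := mul_le_mul_of_nonneg_left (hb.trans h2) hKpos.le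
    linarith
end

section
/- Let T > 0 and let f : [0,T] → [0, ∞) be a Borel measurable, locally bounded, non-negative and non-decreasing function. Suppose there exist positive real constants A, B and a constant K ≥ 0 such that for every t ∈ [0,T], f(t) ≤ A∫₀^t f(s) ds + B(∫₀^t f(s)² ds)^{1/2} + K. Then for every t ∈ [0,T], f(t) ≤ 2 K e^{(2A + B²) t}. -/
open MeasureTheory Set intervalIntegral

/-- **"À la Gronwall" inequality with constant perturbation** (special case of Lemma 3.3).
Let `f : [0,T] → ℝ⁺` be Borel measurable, locally bounded, non-negative and non-decreasing.
If there are positive constants `A, B` and a constant `K ≥ 0` such that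
`f(t) ≤ A ∫₀^t f(s) ds + B (∫₀^t f(s)² ds)^{1/2} + K` for all `t ∈ [0,T]`,
then `f(t) ≤ 2 K e^{(2A + B²) t}` for all `t ∈ [0,T]`. -/
theorem a_la_gronwall_const
    (T : ℝ) (hT : 0 < T) (f : ℝ → ℝ)
    (hf_meas : Measurable f)
    (hf_bdd : BddAbove (f '' Set.Icc 0 T))
    (hf_nonneg : ∀ t ∈ Set.Icc 0 T, 0 ≤ f t)
    (hf_mono : MonotoneOn f (Set.Icc 0 T))
    (A B K : ℝ) (hA : 0 < A) (hB : 0 < B) (hK : 0 ≤ K)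
    (h : ∀ t ∈ Set.Icc 0 T,
      f t ≤ A * (∫ s in (0:ℝ)..t, f s) + B * Real.sqrt (∫ s in (0:ℝ)..t, (f s) ^ 2) + K) :
    ∀ t ∈ Set.Icc 0 T, f t ≤ 2 * K * Real.exp ((2 * A + B ^ 2) * t) := by
  have hint : ∀ a b : ℝ, a ∈ Icc 0 T → b ∈ Icc 0 T → a ≤ b →
      IntervalIntegrable f volume a b := by
    intro a b ha hb hab
    apply MonotoneOn.intervalIntegrable
    rw [uIcc_of_le hab]
    exact hf_mono.mono (Icc_subset_Icc ha.1 hb.2)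
  have h0 : (0:ℝ) ∈ Icc 0 T := ⟨le_rfl, hT.le⟩
  have key : ∀ t ∈ Icc 0 T, f t ≤ (2 * A + B ^ 2) * (∫ s in (0:ℝ)..t, f s) + 2 * K := by
    intro t ht
    have hi := hint 0 t h0 ht ht.1
    have hI : 0 ≤ ∫ s in (0:ℝ)..t, f s :=
      intervalIntegral.integral_nonneg ht.1 (fun s hs => hf_nonneg s ⟨hs.1, hs.2.trans ht.2⟩)
    have hsq : ∫ s in (0:ℝ)..t, (f s) ^ 2 ≤ f t * ∫ s in (0:ℝ)..t, f s := by
      rw [← intervalIntegral.integral_const_mul]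
      apply intervalIntegral.integral_mono_on ht.1 _ (hi.const_mul _)
      · intro s hs
        have hs' : s ∈ Icc 0 T := ⟨hs.1, hs.2.trans ht.2⟩
        have := hf_mono hs' ht hs.2
        nlinarith [hf_nonneg s hs']
      · apply MonotoneOn.intervalIntegrable
        rw [uIcc_of_le ht.1]
        intro x hx y hy hxy
        have hx' : x ∈ Icc 0 T := ⟨hx.1, hx.2.trans ht.2⟩
        have hy' : y ∈ Icc 0 T := ⟨hy.1, hy.2.trans ht.2⟩
        exact pow_le_pow_left₀ (hf_nonneg x hx') (hf_mono hx' hy' hxy) 2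
    have hft := hf_nonneg t ht
    have h1 := h t ht
    have h2 : B * Real.sqrt (∫ s in (0:ℝ)..t, (f s) ^ 2)
        ≤ f t / 2 + B ^ 2 / 2 * ∫ s in (0:ℝ)..t, f s := by
      have h3 := Real.sqrt_le_sqrt hsq
      rw [Real.sqrt_mul hft] at h3
      have h4 := mul_le_mul_of_nonneg_left h3 hB.le
      have h5 := Real.sq_sqrt hft
      have h6 := Real.sq_sqrt hI
      nlinarith [sq_nonneg (√(f t) - B * √(∫ s in (0:ℝ)..t, f s))]
    nlinarith
  set C := 2 * A + B ^ 2 with hC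
  have hCpos : 0 < C := by positivity
  have hcont : ContinuousOn (fun t => ∫ s in (0:ℝ)..t, f s) (Icc 0 T) := by
    have := intervalIntegral.continuousOn_primitive_interval (a := 0) (b := T) (μ := volume) (f := f)
      (by
        rw [uIcc_of_le hT.le]
        exact (intervalIntegrable_iff_integrableOn_Icc_of_le hT.le).1 (hint 0 T h0 ⟨hT.le, le_rfl⟩ hT.le))
    rwa [uIcc_of_le hT.le] at this
  have hg := le_gronwallBound_of_liminf_deriv_right_le (f := fun t => ∫ s in (0:ℝ)..t, f s)
    (f' := fun t => C * (∫ s in (0:ℝ)..t, f s) + 2 * K) (δ := 0) (K := C) (ε := 2 * K)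
    (a := 0) (b := T) hcont
    (by
      intro x hx r hr
      have hx' : x ∈ Icc 0 T := ⟨hx.1, hx.2.le⟩
      have hc : ContinuousWithinAt (fun t => C * (∫ s in (0:ℝ)..t, f s) + 2 * K) (Icc 0 T) x :=
        ((hcont x hx').const_mul C).add_const _
      have hmem : Ioo x T ∈ nhdsWithin x (Ioi x) := Ioo_mem_nhdsGT hx.2
      have hle : nhdsWithin x (Ioi x) ≤ nhdsWithin x (Icc 0 T) := by
        refine nhdsWithin_le_of_mem (Filter.mem_of_superset hmem ?_)
        exact fun y hy => ⟨hx.1.trans hy.1.le, hy.2.le⟩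
      have hev := (hc.mono_left hle).eventually (gt_mem_nhds hr)
      apply Filter.Eventually.frequently
      filter_upwards [hev, hmem] with z hz hzm
      have hz' : z ∈ Icc 0 T := ⟨hx.1.trans hzm.1.le, hzm.2.le⟩
      have e := intervalIntegral.integral_interval_sub_left (hint 0 z h0 hz' hz'.1)
        (hint 0 x h0 hx' hx'.1)
      have hb : ∫ s in x..z, f s ≤ ∫ s in x..z, f z :=
        intervalIntegral.integral_mono_on hzm.1.le (hint x z hx' hz' hzm.1.le) (by simp)
          (fun s hs => hf_mono ⟨hx.1.trans hs.1, hs.2.trans hz'.2⟩ hz' hs.2)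
      rw [intervalIntegral.integral_const, smul_eq_mul] at hb
      have hpos : 0 < z - x := sub_pos.2 hzm.1
      simp only [e]
      refine lt_of_le_of_lt ?_ hz
      refine le_trans ?_ (key z hz')
      rw [inv_mul_le_iff₀ hpos]
      exact hb)
    (by simp) (fun x _ => le_rfl)
  intro t ht
  have h1 := hg t ht
  have h2 := key t ht
  rw [gronwallBound_of_K_ne_0 hCpos.ne'] at h1
  simp only [sub_zero, zero_mul, zero_add] at h1
  have h3 := mul_le_mul_of_nonneg_left h1 hCpos.le
  have h4 : C * (2 * K / C * (Real.exp (C * t) - 1)) = 2 * K * (Real.exp (C * t) - 1) := by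
    field_simp
  linarith
end
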